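/- arXiv:cs/0701032 — 3 statements merged into one kernel-verified Lean document; each statement's English description precedes it below -/
import Mathlib

section
/- Let L be a first-order language, γ a natural number, c : (Σ n, L.Functions n) → ℕ a family of coefficients with 1 ≤ c g and c g ≤ γ for every g, φ : L.Term Empty → ℕ a map satisfying φ (Term.func f ts) = (∑ i, φ (ts i)) + c ⟨n, f⟩ for every n, every f : L.Functions n and every ts : Fin n → L.Term Empty, and sz : L.Term Empty → ℕ a map satisfying sz (Term.func f ts) = (∑ i, sz (ts i)) + 1. Then for every closed term t : L.Term Empty, sz t ≤ φ t and φ t ≤ γ * sz t. -/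
open FirstOrder FirstOrder.Language

/-- Proposition 3.3: `‖t‖ ≤ φ(t) ≤ γ‖t‖` for additive functorial
interpretations. -/
theorem size_le_additive_interpretation_le
    {L : Language} (γ : ℕ) (c : (Σ n : ℕ, L.Functions n) → ℕ)
    (hc1 : ∀ g, 1 ≤ c g) (hcγ : ∀ g, c g ≤ γ)
    (φ : L.Term Empty → ℕ)
    (hφ : ∀ (n : ℕ) (f : L.Functions n) (ts : Fin n → L.Term Empty),
      φ (Term.func f ts) = (∑ i, φ (ts i)) + c ⟨n, f⟩)
    (sz : L.Term Empty → ℕ)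
    (hsz : ∀ (n : ℕ) (f : L.Functions n) (ts : Fin n → L.Term Empty),
      sz (Term.func f ts) = (∑ i, sz (ts i)) + 1) :
    ∀ t : L.Term Empty, sz t ≤ φ t ∧ φ t ≤ γ * sz t := by
  intro t
  induction t with
  | var x => exact x.elim
  | func f ts ih =>
    rw [hφ, hsz, mul_add, mul_one, Finset.mul_sum]
    exact ⟨add_le_add (Finset.sum_le_sum fun i _ => (ih i).1) (hc1 _),
      add_le_add (Finset.sum_le_sum fun i _ => (ih i).2) (hcγ _)⟩
end

section
/- Let L be a first-order language, c : (Σ n, L.Functions n) → ℕ a family of coefficients with 1 ≤ c g for every g, φ : L.Term Empty → ℕ a map satisfying φ (Term.func f ts) = (∑ i, φ (ts i)) + c ⟨n, f⟩ for every n, every f : L.Functions n and every ts : Fin n → L.Term Empty, and m : L.Term Empty → ℕ a map satisfying m (Term.func f ts) = max (Finset.univ.sup (fun i => m (ts i))) (max (Finset.univ.sup (fun i => φ (ts i))) (φ (Term.func f ts))). Then m t = φ t for every closed term t : L.Term Empty. -/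
open FirstOrder FirstOrder.Language

/-- Lemma 3.5: the conservativeness differential interpretation coincides with
an additive functorial interpretation on values. -/
theorem conservativeness_eq_additive_on_values
    {L : Language} (c : (Σ n : ℕ, L.Functions n) → ℕ)
    (hc1 : ∀ g, 1 ≤ c g)
    (φ : L.Term Empty → ℕ)
    (hφ : ∀ (n : ℕ) (f : L.Functions n) (ts : Fin n → L.Term Empty),
      φ (Term.func f ts) = (∑ i, φ (ts i)) + c ⟨n, f⟩)
    (m : L.Term Empty → ℕ)
    (hm : ∀ (n : ℕ) (f : L.Functions n) (ts : Fin n → L.Term Empty),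
      m (Term.func f ts) =
        max (Finset.univ.sup fun i => m (ts i))
          (max (Finset.univ.sup fun i => φ (ts i)) (φ (Term.func f ts)))) :
    ∀ t : L.Term Empty, m t = φ t := by
  intro t
  induction t with
  | var x => exact x.elim
  | func f ts ih =>
    -- Additivity makes every input current at most the output current, so the
    -- output current attains the maximum.
    have hle : (Finset.univ.sup fun i => φ (ts i)) ≤ φ (Term.func f ts) := by
      refine Finset.sup_le fun i _ => ?_
      rw [hφ]
      exact (Finset.single_le_sum_of_canonicallyOrdered
        (f := fun i => φ (ts i)) (Finset.mem_univ i)).trans (Nat.le_add_right _ _)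
    rw [hm]
    simp only [ih]
    rw [max_eq_right hle, max_eq_right hle]
end

section
/- Let L be a first-order language, c : (Σ n, L.Functions n) → ℕ with 1 ≤ c g for every g, φ : L.Term Empty → ℕ satisfying φ (Term.func f ts) = (∑ i, φ (ts i)) + c ⟨n, f⟩, m : L.Term Empty → ℕ satisfying m (Term.func f ts) = max (Finset.univ.sup (fun i => m (ts i))) (max (Finset.univ.sup (fun i => φ (ts i))) (φ (Term.func f ts))), occ : L.Term Empty → ((Σ n, L.Functions n) →₀ ℕ) satisfying occ (Term.func f ts) = (∑ i, occ (ts i)) + Finsupp.single ⟨n, f⟩ 1, and h a family assigning to each n and f : L.Functions n a monotone map h f : (Fin n → ℕ) → ℕ (for the product order on Fin n → ℕ). If d : L.Term Empty → ℕ satisfies d (Term.func f ts) = (∑ i, d (ts i)) + h f (fun i => φ (ts i)), then for every closed term t : L.Term Empty, d t ≤ (occ t).sum (fun g k => k * h g.2 (fun _ => m t)). -/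
/-!
Structural induction on the closed term. Since the current bound `m t` changes from a term to its
subterms, the induction is run on the stronger claim that `d t` is at most the weighted sum
evaluated at any `M ≥ m t`. At `f(ts)`, the weighted sum is additive in the occurrence vector, so
it splits into the weighted sums of the arguments, which bound `d (ts i)` because
`m (ts i) ≤ m (f(ts)) ≤ M`, plus the single term `h f (M, …, M)`, which bounds the contribution
`h f (φ ts)` of the root because `φ (ts i) ≤ m (f(ts)) ≤ M` and `h f` is monotone.
-/

open FirstOrder FirstOrder.Language

/-- Lemma 2.24 restricted to values: a differential interpretation on a closed
term is bounded by the weighted sum, over all symbols, of the differential of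
the symbol evaluated at the maximal current `m t`. -/
theorem differential_le_weighted_bound_on_values
    {L : Language} (c : (Σ n : ℕ, L.Functions n) → ℕ)
    (φ : L.Term Empty → ℕ)
    (hφ : ∀ (n : ℕ) (f : L.Functions n) (ts : Fin n → L.Term Empty),
      φ (Term.func f ts) = (∑ i, φ (ts i)) + c ⟨n, f⟩)
    (m : L.Term Empty → ℕ)
    (hm : ∀ (n : ℕ) (f : L.Functions n) (ts : Fin n → L.Term Empty),
      m (Term.func f ts) =
        max (Finset.univ.sup fun i => m (ts i))
          (max (Finset.univ.sup fun i => φ (ts i)) (φ (Term.func f ts))))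
    (occ : L.Term Empty → ((Σ n : ℕ, L.Functions n) →₀ ℕ))
    (hocc : ∀ (n : ℕ) (f : L.Functions n) (ts : Fin n → L.Term Empty),
      occ (Term.func f ts) = (∑ i, occ (ts i)) + Finsupp.single ⟨n, f⟩ 1)
    (h : ∀ n : ℕ, L.Functions n → (Fin n → ℕ) → ℕ)
    (hmono : ∀ (n : ℕ) (f : L.Functions n), Monotone (h n f))
    (d : L.Term Empty → ℕ)
    (hd : ∀ (n : ℕ) (f : L.Functions n) (ts : Fin n → L.Term Empty),
      d (Term.func f ts) = (∑ i, d (ts i)) + h n f fun i => φ (ts i)) :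
    ∀ t : L.Term Empty,
      d t ≤ (occ t).sum fun g k => k * h g.1 g.2 fun _ => m t := by
  suffices key : ∀ (t : L.Term Empty) (M : ℕ), m t ≤ M →
      d t ≤ (occ t).sum fun g k => k * h g.1 g.2 fun _ => M from
    fun t => key t (m t) le_rfl
  intro t
  induction t with
  | var x => exact x.elim
  | @func n f ts ih =>
    intro M hM
    rw [hm, max_le_iff, max_le_iff, Finset.sup_le_iff, Finset.sup_le_iff] at hM
    obtain ⟨hargs, hφargs, -⟩ := hM
    rw [hd, hocc, Finsupp.sum_add_index' (fun _ => zero_mul _) (fun _ _ _ => add_mul _ _ _),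
      ← Finsupp.sum_finsetSum_index (fun _ => zero_mul _) (fun _ _ _ => add_mul _ _ _),
      Finsupp.sum_single_index (zero_mul _), one_mul]
    exact add_le_add (Finset.sum_le_sum fun i _ => ih i M (hargs i (Finset.mem_univ i)))
      (hmono n f fun i => hφargs i (Finset.mem_univ i))
end
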